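/- Let 0 ≤ m ≤ 1 and ω_j := √(j⁴ + m j²) for integers j ≥ 1. Then for all integers i, j, k with 2 ≤ i ≤ j < k, one has |ω_i + ω_j − ω_k| ≥ (7/16)·m. -/

import Mathlib

/-!
For `j ≥ 2` and `0 ≤ m ≤ 1` one has `j² + (15/32) m ≤ ω_j ≤ j² + m/2`. Put `n = i² + j² - k²`,
an integer. If `n ≥ 0`, then `ω_i + ω_j - ω_k ≥ 2 · (15/32) m - m/2 = (7/16) m`. If `n ≤ -1`, then
`ω_i + ω_j - ω_k ≤ -1 + m - (15/32) m ≤ -(15/32) m`.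
-/

/-- Linear frequencies `ω_j = √(j⁴ + m j²)` of the hinged beam. -/
noncomputable def beamOmega (m : ℝ) (j : ℕ) : ℝ :=
  Real.sqrt ((j : ℝ) ^ 4 + m * (j : ℝ) ^ 2)

lemma beamOmega_le (m : ℝ) (hm0 : 0 ≤ m) (j : ℕ) : beamOmega m j ≤ (j : ℝ) ^ 2 + m / 2 := by
  unfold beamOmega
  apply Real.sqrt_le_iff.mpr
  constructor
  · positivity
  · nlinarith [sq_nonneg m]

lemma le_beamOmega (m : ℝ) (hm0 : 0 ≤ m) (hm1 : m ≤ 1) (j : ℕ) (hj : 2 ≤ j) :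
    (j : ℝ) ^ 2 + 15 / 32 * m ≤ beamOmega m j := by
  unfold beamOmega
  apply Real.le_sqrt_of_sq_le
  have hj' : (2 : ℝ) ≤ j := by exact_mod_cast hj
  have hx : (4 : ℝ) ≤ (j : ℝ) ^ 2 := by nlinarith
  nlinarith [mul_nonneg hm0 (sub_nonneg.mpr hx), mul_nonneg hm0 (sub_nonneg.mpr hm1)]

/-- Lower bound `|ω_i + ω_j - ω_k| ≥ (7/16)·m` for `2 ≤ i ≤ j < k` and `0 ≤ m ≤ 1`. -/
theorem beam_sixth_order_nonresonance_pos
    (m : ℝ) (hm0 : 0 ≤ m) (hm1 : m ≤ 1)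
    (i j k : ℕ) (hi : 2 ≤ i) (hij : i ≤ j) (hjk : j < k) :
    7/16 * m ≤ |beamOmega m i + beamOmega m j - beamOmega m k| := by
  have ui := beamOmega_le m hm0 i
  have uj := beamOmega_le m hm0 j
  have uk := beamOmega_le m hm0 k
  have li := le_beamOmega m hm0 hm1 i hi
  have lj := le_beamOmega m hm0 hm1 j (by omega)
  have lk := le_beamOmega m hm0 hm1 k (by omega)
  rcases le_or_gt (k ^ 2) (i ^ 2 + j ^ 2) with h | h
  · have h' : (k : ℝ) ^ 2 ≤ (i : ℝ) ^ 2 + (j : ℝ) ^ 2 := by exact_mod_cast h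
    exact le_abs.mpr (Or.inl (by linarith))
  · have h' : (i : ℝ) ^ 2 + (j : ℝ) ^ 2 + 1 ≤ (k : ℝ) ^ 2 := by exact_mod_cast h
    exact le_abs.mpr (Or.inr (by linarith))
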